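/- arXiv:2502.10314 — 5 statements merged into one kernel-verified Lean document; each statement's English description precedes it below -/
import Mathlib

section
/- For every instance of interval selection with unit weights, every prediction assignment, and every maximum-cardinality feasible set OPT, the solution produced by algorithm Naive satisfies ALG ≥ OPT − η, where η is the total prediction error relative to OPT. -/
attribute [local instance] Classical.propDecidable

noncomputable section

/-- An interval `I = (s, f)` with `s < f`, occupying `[s, f)`. -/
structure Ivl where
  s : ℝ
  f : ℝ
  lt : s < f

namespace Ivl

/-- The set of points occupied by an interval: the half-open set `[s, f)`. -/
def occ (I : Ivl) : Set ℝ := Set.Ico I.s I.f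

/-- The length of an interval, `f - s` (also its proportional weight). -/
def len (I : Ivl) : ℝ := I.f - I.s

end Ivl

/-- Two intervals conflict if their occupied sets intersect. -/
def Conflict (I J : Ivl) : Prop := (I.occ ∩ J.occ).Nonempty

/-- A set of intervals is feasible if its elements are pairwise disjoint. -/
def Feasible (S : Finset Ivl) : Prop :=
  ∀ I ∈ S, ∀ J ∈ S, I ≠ J → ¬ Conflict I J

/-- `opt` is a maximum-cardinality feasible subset of the instance's intervals. -/
def IsMaxCardOpt (inst : List Ivl) (opt : Finset Ivl) : Prop :=
  (∀ I ∈ opt, I ∈ inst) ∧ Feasible opt ∧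
    ∀ T : Finset Ivl, (∀ I ∈ T, I ∈ inst) → Feasible T → T.card ≤ opt.card

/-- The prediction error introduced by interval `I`, relative to `opt`,
with weight function `w`. -/
def err (w : Ivl → ℝ) (opt : Finset Ivl) (Prd : Ivl → Bool) (I : Ivl) : ℝ :=
  if (Prd I = true ↔ I ∈ opt) then 0
  else if I ∈ opt then w I
  else (∑ J ∈ opt.filter (fun J => Conflict J I), w J) - w I

/-- The total prediction error of the instance relative to `opt`. -/
def totalErr (w : Ivl → ℝ) (opt : Finset Ivl) (Prd : Ivl → Bool)
    (inst : List Ivl) : ℝ :=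
  (inst.map (err w opt Prd)).sum

/-- One step of algorithm `Naive`: accept `I` iff it is predicted optimal
and conflicts with nothing in the current solution. -/
def naiveStep (Prd : Ivl → Bool) (S : Finset Ivl) (I : Ivl) : Finset Ivl :=
  if Prd I = true ∧ ∀ J ∈ S, ¬ Conflict I J then insert I S else S

/-- Algorithm `Naive` run on the whole instance, in order. -/
def naive (Prd : Ivl → Bool) (inst : List Ivl) : Finset Ivl :=
  inst.foldl (naiveStep Prd) ∅

theorem foldl_naive_props (Prd : Ivl → Bool) (l : List Ivl) :
    ∀ S : Finset Ivl,
      S ⊆ l.foldl (naiveStep Prd) S ∧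
      (∀ I ∈ l.foldl (naiveStep Prd) S, I ∈ S ∨ (I ∈ l ∧ Prd I = true)) ∧
      (∀ I ∈ l, Prd I = true → I ∈ l.foldl (naiveStep Prd) S ∨
        ∃ J ∈ l.foldl (naiveStep Prd) S, Conflict I J) := by
  induction l with
  | nil => intro S; simp
  | cons a l ih =>
    intro S
    obtain ⟨h1, h2, h3⟩ := ih (naiveStep Prd S a)
    simp only [List.foldl_cons]
    have hS : S ⊆ naiveStep Prd S a := by
      unfold naiveStep; split_ifs
      · exact Finset.subset_insert _ _
      · exact Finset.Subset.refl _
    refine ⟨hS.trans h1, ?_, ?_⟩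
    · intro I hI
      rcases h2 I hI with h | h
      · unfold naiveStep at h
        split_ifs at h with hc
        · rcases Finset.mem_insert.1 h with rfl | h
          · exact Or.inr ⟨by simp, hc.1⟩
          · exact Or.inl h
        · exact Or.inl h
      · exact Or.inr ⟨List.mem_cons_of_mem _ h.1, h.2⟩
    · intro I hI hP
      rcases List.mem_cons.1 hI with rfl | hI
      · by_cases hc : ∀ J ∈ S, ¬ Conflict I J
        · left
          apply h1
          unfold naiveStep
          rw [if_pos ⟨hP, hc⟩]
          exact Finset.mem_insert_self _ _
        · push Not at hc
          obtain ⟨J, hJ, hJc⟩ := hc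
          exact Or.inr ⟨J, h1 (hS hJ), hJc⟩
      · exact h3 I hI hP

theorem Conflict.symm' {I J : Ivl} (h : Conflict I J) : Conflict J I := by
  unfold Conflict at *; rwa [Set.inter_comm]

theorem one_le_conflicts (inst : List Ivl) (opt : Finset Ivl)
    (hopt : IsMaxCardOpt inst opt) (I : Ivl) (hI : I ∈ inst) (hn : I ∉ opt) :
    1 ≤ (opt.filter (fun J => Conflict J I)).card := by
  by_contra hlt
  have h0 : opt.filter (fun J => Conflict J I) = ∅ := by
    rw [← Finset.card_eq_zero]; omega
  have hnc : ∀ J ∈ opt, ¬ Conflict J I := fun J hJ hc => by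
    have : J ∈ opt.filter (fun J => Conflict J I) := Finset.mem_filter.2 ⟨hJ, hc⟩
    rw [h0] at this; simp at this
  obtain ⟨ho1, ho2, ho3⟩ := hopt
  have := ho3 (insert I opt) (by
      intro K hK
      rcases Finset.mem_insert.1 hK with rfl | hK
      · exact hI
      · exact ho1 K hK) (by
      intro K hK L hL hne
      rcases Finset.mem_insert.1 hK with rfl | hK <;>
      rcases Finset.mem_insert.1 hL with rfl | hL
      · exact absurd rfl hne
      · exact fun h => hnc L hL h.symm'
      · exact hnc K (by assumption)
      · exact ho2 K hK L hL hne)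
  rw [Finset.card_insert_of_notMem hn] at this
  omega

theorem naive_unit_performance
    (inst : List Ivl) (hdist : inst.Nodup) (Prd : Ivl → Bool)
    (opt : Finset Ivl) (hopt : IsMaxCardOpt inst opt) :
    ((naive Prd inst).card : ℝ) ≥
      (opt.card : ℝ) - totalErr (fun _ => 1) opt Prd inst := by
  obtain ⟨-, h2, h3⟩ := foldl_naive_props Prd inst ∅
  change ∀ I ∈ naive Prd inst, _ at h2
  change ∀ I ∈ inst, Prd I = true → I ∈ naive Prd inst ∨
    ∃ J ∈ naive Prd inst, Conflict I J at h3
  generalize naive Prd inst = S at h2 h3 ⊢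
  have hSi : ∀ I ∈ S, I ∈ inst ∧ Prd I = true := fun I hI => by
    rcases h2 I hI with h | h
    · simp at h
    · exact h
  have hO := hopt.1
  have hF := hopt.2.1
  set A := opt.filter (fun I => Prd I = false) with hA
  set c : Ivl → Finset Ivl := fun I => opt.filter (fun J => Conflict J I) with hc
  have hcover : opt ⊆ (opt ∩ S) ∪ (A ∪ (S \ opt).biUnion c) := by
    intro I hI
    simp only [Finset.mem_union, Finset.mem_inter, Finset.mem_biUnion, Finset.mem_sdiff, hA, hc,
      Finset.mem_filter]
    by_cases hP : Prd I = true
    · by_cases hIS : I ∈ S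
      · exact Or.inl ⟨hI, hIS⟩
      · rcases h3 I (hO I hI) hP with h | ⟨J, hJ, hJc⟩
        · exact absurd h hIS
        · refine Or.inr (Or.inr ⟨J, ⟨hJ, fun hJo => ?_⟩, hI, hJc⟩)
          exact hF I hI J hJo (fun h => hIS (h ▸ hJ)) hJc
    · exact Or.inr (Or.inl ⟨hI, by simpa using hP⟩)
  have hcard : opt.card ≤ (opt ∩ S).card + (A.card + ∑ I ∈ S \ opt, (c I).card) :=
    (Finset.card_le_card hcover).trans <| (Finset.card_union_le _ _).trans <|
      Nat.add_le_add_left ((Finset.card_union_le _ _).trans <|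
        Nat.add_le_add_left Finset.card_biUnion_le _) _
  have hcardR : (opt.card : ℝ) ≤
      (opt ∩ S).card + (A.card + ∑ I ∈ S \ opt, ((c I).card : ℝ)) := by
    exact_mod_cast hcard
  have hScard : ((S.card : ℕ) : ℝ) = (opt ∩ S).card + (S \ opt).card := by
    rw [Finset.inter_comm]
    exact_mod_cast (Finset.card_inter_add_card_sdiff S opt).symm
  have hnonneg : ∀ I ∈ inst, 0 ≤ err (fun _ => 1) opt Prd I := by
    intro I hI
    unfold err
    split_ifs with ha hb
    · exact le_rfl
    · exact zero_le_one
    · have := one_le_conflicts inst opt hopt I hI hb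
      have h' : (1 : ℝ) ≤ (opt.filter (fun J => Conflict J I)).card := by exact_mod_cast this
      simpa using h'
  have htot : totalErr (fun _ => 1) opt Prd inst =
      ∑ I ∈ inst.toFinset, err (fun _ => 1) opt Prd I := by
    unfold totalErr
    rw [List.sum_toFinset _ hdist]
  have hdisj : Disjoint A (S \ opt) := by
    rw [Finset.disjoint_left]
    intro I h h'
    exact (Finset.mem_sdiff.1 h').2 (Finset.mem_filter.1 h).1
  have hsub : A ∪ (S \ opt) ⊆ inst.toFinset := by
    intro I hI
    rw [List.mem_toFinset]
    rcases Finset.mem_union.1 hI with h | h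
    · exact hO I (Finset.mem_filter.1 h).1
    · exact (hSi I (Finset.mem_sdiff.1 h).1).1
  have hge : ∑ I ∈ A ∪ (S \ opt), err (fun _ => 1) opt Prd I ≤
      ∑ I ∈ inst.toFinset, err (fun _ => 1) opt Prd I :=
    Finset.sum_le_sum_of_subset_of_nonneg hsub
      (fun I hI _ => hnonneg I (List.mem_toFinset.1 hI))
  rw [Finset.sum_union hdisj] at hge
  have hAs : ∑ I ∈ A, err (fun _ => 1) opt Prd I = A.card := by
    rw [Finset.sum_congr rfl (g := fun _ => (1 : ℝ))]
    · simp
    · intro I hI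
      obtain ⟨ha, hb⟩ := Finset.mem_filter.1 hI
      simp [err, ha, hb]
  have hBs : ∑ I ∈ S \ opt, err (fun _ => 1) opt Prd I =
      ∑ I ∈ S \ opt, ((c I).card : ℝ) - (S \ opt).card := by
    rw [Finset.sum_congr rfl (g := fun I => ((c I).card : ℝ) - 1)]
    · simp [Finset.sum_sub_distrib]
    · intro I hI
      obtain ⟨ha, hb⟩ := Finset.mem_sdiff.1 hI
      simp [err, (hSi I ha).2, hb, hc]
  rw [htot]
  linarith
end
end

section
/- Algorithm LR with parameter β is (2β+1)-competitive for interval selection with proportional weights when β ≥ φ = (1+√5)/2: for every real β ≥ (1+√5)/2, every instance, and every maximum-weight feasible set OPT, the solution produced by LR satisfies OPT ≤ (2β+1)·ALG. -/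
attribute [local instance] Classical.propDecidable

noncomputable section

/-- The total (proportional) weight of a finite set of intervals. -/
def wsum (S : Finset Ivl) : ℝ := ∑ I ∈ S, I.len

/-- `opt` is a maximum-weight feasible subset of the instance's intervals,
for proportional weights. -/
def IsMaxWeightOpt (inst : List Ivl) (opt : Finset Ivl) : Prop :=
  (∀ I ∈ opt, I ∈ inst) ∧ Feasible opt ∧
    ∀ T : Finset Ivl, (∀ I ∈ T, I ∈ inst) → Feasible T → wsum T ≤ wsum opt

/-- One step of algorithm `LR` with parameter `β` upon the arrival of `I`:
accept `I` (displacing its conflicts) iff its weight exceeds `β` times the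
largest weight of a conflicting interval in the solution (0 if none). -/
def lrStep (β : ℝ) (S : Finset Ivl) (I : Ivl) : Finset Ivl :=
  let Is := S.filter (fun J => Conflict I J)
  if I.len > β * (if h : Is.Nonempty then Is.sup' h Ivl.len else 0) then
    insert I (S \ Is)
  else S

/-- The solution produced by algorithm `LR` with parameter `β`. -/
def lr (β : ℝ) (inst : List Ivl) : Finset Ivl :=
  inst.foldl (lrStep β) ∅

/-- `I` lies in the extension by `β` times its length on both sides of an element of `S`. -/
def Cov (β : ℝ) (S : Finset Ivl) (I : Ivl) : Prop :=
  ∃ A ∈ S, A.s - β * A.len ≤ I.s ∧ I.f ≤ A.f + β * A.len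

lemma conflict_bounds {I J : Ivl} (h : Conflict I J) : I.s < J.f ∧ J.s < I.f := by
  obtain ⟨x, hx, hy⟩ := h
  simp only [Ivl.occ, Set.mem_Ico] at hx hy
  constructor <;> linarith

lemma cov_step_old (β : ℝ) (h0 : 0 < β) (hb : β + 1 ≤ β * β) (S : Finset Ivl) (I K : Ivl)
    (h : Cov β S K) : Cov β (lrStep β S I) K := by
  obtain ⟨A, hA, h1, h2⟩ := h
  unfold lrStep
  simp only
  split_ifs with h3 h4 h4
  · by_cases hc : Conflict I A
    · refine ⟨I, Finset.mem_insert_self _ _, ?_⟩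
      have hm : A ∈ S.filter (fun J => Conflict I J) := Finset.mem_filter.2 ⟨hA, hc⟩
      have hle := Finset.le_sup' Ivl.len hm
      have hI : β * A.len < I.len := lt_of_le_of_lt (mul_le_mul_of_nonneg_left hle h0.le) h4
      have hp : 0 < A.len := sub_pos.2 A.lt
      obtain ⟨c1, c2⟩ := conflict_bounds hc
      have e1 : (β + 1) * A.len ≤ β * β * A.len := mul_le_mul_of_nonneg_right hb hp.le
      have e2 : β * (β * A.len) < β * I.len := mul_lt_mul_of_pos_left hI h0
      have e3 : A.len = A.f - A.s := rfl
      constructor <;> nlinarith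
    · exact ⟨A, by simp [hA, hc], h1, h2⟩
  · exact ⟨A, hA, h1, h2⟩
  · refine ⟨A, ?_, h1, h2⟩
    rw [Finset.not_nonempty_iff_eq_empty] at h3
    simp [h3, hA]
  · exact ⟨A, hA, h1, h2⟩

lemma cov_step_new (β : ℝ) (h0 : 0 < β) (S : Finset Ivl) (I : Ivl) :
    Cov β (lrStep β S I) I := by
  have hp : 0 < I.len := sub_pos.2 I.lt
  have hbp : 0 < β * I.len := mul_pos h0 hp
  unfold lrStep
  simp only
  by_cases h4 : (S.filter (fun J => Conflict I J)).Nonempty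
  · rw [dif_pos h4]
    split_ifs with h3
    · exact ⟨I, Finset.mem_insert_self _ _, by linarith, by linarith⟩
    · obtain ⟨J, hJ, he⟩ := Finset.exists_mem_eq_sup' h4 Ivl.len
      rw [he] at h3
      obtain ⟨hJS, hc⟩ := Finset.mem_filter.1 hJ
      obtain ⟨c1, c2⟩ := conflict_bounds hc
      have e3 : I.len = I.f - I.s := rfl
      exact ⟨J, hJS, by linarith, by linarith⟩
  · rw [dif_neg h4, mul_zero, if_pos hp]
    exact ⟨I, Finset.mem_insert_self _ _, by linarith, by linarith⟩

lemma cov_foldl (β : ℝ) (h0 : 0 < β) (hb : β + 1 ≤ β * β) (l : List Ivl) :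
    ∀ (S : Finset Ivl) (K : Ivl), (Cov β S K ∨ K ∈ l) → Cov β (l.foldl (lrStep β) S) K := by
  induction l with
  | nil => intro S K h; simpa using h
  | cons I l ih =>
    intro S K h
    rw [List.foldl_cons]
    apply ih
    rcases h with h | h
    · exact Or.inl (cov_step_old β h0 hb S I K h)
    · rcases List.mem_cons.1 h with rfl | h
      · exact Or.inl (cov_step_new β h0 S K)
      · exact Or.inr h

open MeasureTheory in
lemma wsum_le_of_cov (β : ℝ) (h0 : 0 < β) (S T : Finset Ivl) (hT : Feasible T)
    (h : ∀ K ∈ T, Cov β S K) : wsum T ≤ (2 * β + 1) * wsum S := by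
  have hsub : (⋃ K ∈ T, K.occ) ⊆ ⋃ A ∈ S, Set.Ico (A.s - β * A.len) (A.f + β * A.len) := by
    intro x hx
    simp only [Set.mem_iUnion, exists_prop] at hx ⊢
    obtain ⟨K, hK, hx⟩ := hx
    obtain ⟨A, hA, h1, h2⟩ := h K hK
    simp only [Ivl.occ, Set.mem_Ico] at hx
    exact ⟨A, hA, by linarith, by linarith⟩
  have hv : volume (⋃ K ∈ T, K.occ) = ∑ K ∈ T, ENNReal.ofReal K.len := by
    rw [measure_biUnion_finset]
    · exact Finset.sum_congr rfl fun K _ => by simp [Ivl.occ, Ivl.len]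
    · intro I hI J hJ hne
      rw [Function.onFun, Set.disjoint_iff_inter_eq_empty, ← Set.not_nonempty_iff_eq_empty]
      exact hT I hI J hJ hne
    · intro K _
      exact measurableSet_Ico
  have hle := (measure_mono (μ := volume) hsub).trans (measure_biUnion_finset_le S _)
  rw [hv] at hle
  have hS : ∑ A ∈ S, volume (Set.Ico (A.s - β * A.len) (A.f + β * A.len))
      = ∑ A ∈ S, ENNReal.ofReal ((2 * β + 1) * A.len) := by
    refine Finset.sum_congr rfl fun A _ => ?_
    rw [Real.volume_Ico]
    congr 1
    unfold Ivl.len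
    ring
  have hpos : ∀ A : Ivl, 0 ≤ A.len := fun A => (sub_pos.2 A.lt).le
  have hpos' : ∀ A : Ivl, 0 ≤ (2 * β + 1) * A.len := fun A => mul_nonneg (by linarith) (hpos A)
  rw [hS, ← ENNReal.ofReal_sum_of_nonneg fun A _ => hpos A,
    ← ENNReal.ofReal_sum_of_nonneg fun A _ => hpos' A,
    ENNReal.ofReal_le_ofReal_iff (Finset.sum_nonneg fun A _ => hpos' A)] at hle
  unfold wsum
  rwa [Finset.mul_sum]

theorem lr_competitive
    (β : ℝ) (hβ : (1 + Real.sqrt 5) / 2 ≤ β)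
    (inst : List Ivl) (hdist : inst.Nodup)
    (opt : Finset Ivl) (hopt : IsMaxWeightOpt inst opt) :
    wsum opt ≤ (2 * β + 1) * wsum (lr β inst) := by
  have h5 : Real.sqrt 5 * Real.sqrt 5 = 5 := Real.mul_self_sqrt (by norm_num)
  have h5n : 0 ≤ Real.sqrt 5 := Real.sqrt_nonneg 5
  have h0 : 0 < β := by linarith
  have hb : β + 1 ≤ β * β := by nlinarith
  exact wsum_le_of_cov β h0 _ opt hopt.2.1 fun K hK =>
    cov_foldl β h0 hb inst ∅ K (Or.inr (hopt.1 K hK))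
end
end

section
/- For interval selection with proportional weights and revocable acceptances, 1-consistency is unattainable while maintaining bounded robustness: for every deterministic online algorithm A with revocable acceptances and every real c ≥ 1, if A is 1-consistent, then A is not c-robust, i.e., there exist an instance, a prediction assignment, and a maximum-weight feasible set OPT such that OPT > c·ALG. -/
attribute [local instance] Classical.propDecidable

noncomputable section

/-- The solution of a deterministic online algorithm `A` with revocable
acceptances when run on the instance `inst` with predictions `Prd`:
`A` applied to the whole sequence of (interval, prediction) pairs. -/
def runRevocable (A : List (Ivl × Bool) → Finset Ivl) (Prd : Ivl → Bool)
    (inst : List Ivl) : Finset Ivl :=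
  A (inst.map (fun I => (I, Prd I)))

theorem wsum_mono_aux {S T : Finset Ivl} (h : S ⊆ T) : wsum S ≤ wsum T := by
  unfold wsum
  apply Finset.sum_le_sum_of_subset_of_nonneg h
  intro I _ _
  have := I.lt
  unfold Ivl.len
  linarith

theorem one_consistency_excludes_bounded_robustness
    (A : List (Ivl × Bool) → Finset Ivl)
    (hstart : A [] = ∅)
    (hfeas : ∀ σ : List (Ivl × Bool), Feasible (A σ))
    (honline : ∀ (σ : List (Ivl × Bool)) (x : Ivl × Bool),
      A (σ ++ [x]) ⊆ insert x.1 (A σ))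
    (c : ℝ) (hc : 1 ≤ c)
    (hconsistent : ∀ (inst : List Ivl) (Prd : Ivl → Bool) (opt : Finset Ivl),
      inst.Nodup → IsMaxWeightOpt inst opt →
      (∀ I ∈ inst, (Prd I = true ↔ I ∈ opt)) →
      wsum opt ≤ 1 * wsum (runRevocable A Prd inst)) :
    ∃ (inst : List Ivl) (Prd : Ivl → Bool) (opt : Finset Ivl),
      inst.Nodup ∧ IsMaxWeightOpt inst opt ∧
      wsum opt > c * wsum (runRevocable A Prd inst) := by
  obtain ⟨I, hIs, hIf⟩ : ∃ I : Ivl, I.s = 0 ∧ I.f = 2 * c + 2 :=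
    ⟨⟨0, 2 * c + 2, by linarith⟩, rfl, rfl⟩
  obtain ⟨J, hJs, hJf⟩ : ∃ I : Ivl, I.s = -1 ∧ I.f = 1 :=
    ⟨⟨-1, 1, by linarith⟩, rfl, rfl⟩
  obtain ⟨K, hKs, hKf⟩ : ∃ I : Ivl, I.s = 1 ∧ I.f = 2 * c + 2 :=
    ⟨⟨1, 2 * c + 2, by linarith⟩, rfl, rfl⟩
  have hIJ : I ≠ J := by rintro rfl; linarith
  have hIK : I ≠ K := by rintro rfl; linarith
  have hJK : J ≠ K := by rintro rfl; linarith
  have cIJ : Conflict I J := ⟨0, by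
    simp only [Ivl.occ, Set.mem_inter_iff, Set.mem_Ico]
    refine ⟨⟨?_, ?_⟩, ?_, ?_⟩ <;> linarith⟩
  have cIK : Conflict I K := ⟨1, by
    simp only [Ivl.occ, Set.mem_inter_iff, Set.mem_Ico]
    refine ⟨⟨?_, ?_⟩, ?_, ?_⟩ <;> linarith⟩
  have nJK : ¬ Conflict J K := by
    rintro ⟨x, hx⟩
    simp only [Ivl.occ, Set.mem_inter_iff, Set.mem_Ico] at hx
    linarith [hx.1.2, hx.2.1]
  have nKJ : ¬ Conflict K J := by
    rintro ⟨x, hx⟩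
    simp only [Ivl.occ, Set.mem_inter_iff, Set.mem_Ico] at hx
    linarith [hx.1.1, hx.2.2]
  have wI : wsum {I} = 2 * c + 2 := by simp [wsum, Ivl.len, hIs, hIf]
  have wJ : wsum {J} = 2 := by simp [wsum, Ivl.len, hJs, hJf]; norm_num
  have wK : wsum {K} = 2 * c + 1 := by simp [wsum, Ivl.len, hKs, hKf]; ring
  have wJK : wsum {J, K} = 2 * c + 3 := by
    rw [wsum, Finset.sum_pair hJK]; simp only [Ivl.len, hJs, hJf, hKs, hKf]; ring
  have bound : ∀ T : Finset Ivl, (∀ X ∈ T, X ∈ [I, J, K]) → Feasible T → J ∉ T →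
      wsum T ≤ 2 * c + 2 := by
    intro T hT hF hJ
    by_cases hI : I ∈ T
    · rw [← wI]
      apply wsum_mono_aux
      intro X hX
      have h1 := hT X hX
      simp only [List.mem_cons, List.not_mem_nil, or_false] at h1
      rcases h1 with rfl | rfl | rfl
      · simp
      · exact absurd hX hJ
      · exact absurd cIK (hF _ hI _ hX hIK)
    · have : wsum T ≤ wsum {K} := by
        apply wsum_mono_aux
        intro X hX
        have h1 := hT X hX
        simp only [List.mem_cons, List.not_mem_nil, or_false] at h1
        rcases h1 with rfl | rfl | rfl
        · exact absurd hX hI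
        · exact absurd hX hJ
        · simp
      linarith
  have opt3 : IsMaxWeightOpt [I, J, K] {J, K} := by
    refine ⟨by intro X hX; simp at hX ⊢; tauto, ?_, ?_⟩
    · intro X hX Y hY hXY
      simp only [Finset.mem_insert, Finset.mem_singleton] at hX hY
      rcases hX with rfl | rfl <;> rcases hY with rfl | rfl <;> first | assumption | exact absurd rfl hXY
    · intro T hT hF
      by_cases hJ : J ∈ T
      · apply wsum_mono_aux
        intro X hX
        have h1 := hT X hX
        simp only [List.mem_cons, List.not_mem_nil, or_false] at h1
        rcases h1 with rfl | rfl | rfl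
        · exact absurd cIJ (hF _ hX _ hJ hIJ)
        · simp
        · simp
      · linarith [bound T hT hF hJ]
  have opt2 : IsMaxWeightOpt [I, J] {I} := by
    refine ⟨by simp, ?_, ?_⟩
    · intro X hX Y hY hXY
      simp only [Finset.mem_singleton] at hX hY
      exact absurd (hX.trans hY.symm) hXY
    · intro T hT hF
      by_cases hI : I ∈ T
      · apply wsum_mono_aux
        intro X hX
        have h1 := hT X hX
        simp only [List.mem_cons, List.not_mem_nil, or_false] at h1
        rcases h1 with rfl | rfl
        · simp
        · exact absurd cIJ (hF _ hI _ hX hIJ)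
      · have : wsum T ≤ wsum {J} := by
          apply wsum_mono_aux
          intro X hX
          have h1 := hT X hX
          simp only [List.mem_cons, List.not_mem_nil, or_false] at h1
          rcases h1 with rfl | rfl
          · exact absurd hX hI
          · simp
        linarith
  let P : Ivl → Bool := fun X => decide (X ∈ ({J, K} : Finset Ivl))
  have h1 := honline [] (I, P I)
  have h2 := honline [(I, P I)] (J, P J)
  have h3 := honline [(I, P I), (J, P J)] (K, P K)
  simp only [List.nil_append, List.cons_append, hstart] at h1 h2 h3
  have hcon := hconsistent [I, J, K] P {J, K} (by simp [hIJ, hIK, hJK]) opt3 (by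
    intro X _; simp only [P, decide_eq_true_eq])
  simp only [runRevocable, List.map_cons, List.map_nil] at hcon
  have sub1 : ∀ X ∈ A [(I, P I)], X = I := fun X hX => by simpa using h1 hX
  have sub2 : ∀ X ∈ A [(I, P I), (J, P J)], X = J ∨ X = I := fun X hX => by
    rcases Finset.mem_insert.1 (h2 hX) with h | h
    · exact Or.inl h
    · exact Or.inr (sub1 X h)
  have hJ3 : J ∈ A [(I, P I), (J, P J), (K, P K)] := by
    by_contra hJ
    have := bound _ (fun X hX => by
      rcases Finset.mem_insert.1 (h3 hX) with h | h
      · simp [h]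
      · rcases sub2 X h with h | h <;> simp [h]) (hfeas _) hJ
    linarith
  have hJ2 : J ∈ A [(I, P I), (J, P J)] := by
    rcases Finset.mem_insert.1 (h3 hJ3) with h | h
    · exact absurd h hJK
    · exact h
  refine ⟨[I, J], P, {I}, by simp [hIJ], opt2, ?_⟩
  simp only [runRevocable, List.map_cons, List.map_nil]
  have hle : wsum (A [(I, P I), (J, P J)]) ≤ wsum {J} := by
    apply wsum_mono_aux
    intro X hX
    rcases sub2 X hX with rfl | rfl
    · simp
    · exact absurd cIJ (hfeas _ _ hX _ hJ2 hIJ)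
  rw [wJ] at hle
  rw [wI]
  nlinarith
end
end

section
/- Algorithm Revoke-Proportional with parameter λ > 1 is 3λ/(λ−1)-consistent for interval selection with proportional weights: for every real λ > 1, every instance, and every maximum-weight feasible set OPT, if every prediction is accurate with respect to OPT (Prd(I)=1 ⟺ I∈OPT for all intervals I of the instance), then the solution produced by Revoke-Proportional satisfies OPT ≤ (3λ/(λ−1))·ALG. -/
attribute [local instance] Classical.propDecidable

noncomputable section

/-- One step of algorithm `Revoke-Proportional` with parameter `lam` upon
the arrival of `I`. -/
def revokePropStep (lam : ℝ) (Prd : Ivl → Bool) (S : Finset Ivl) (I : Ivl) :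
    Finset Ivl :=
  let Is := S.filter (fun J => Conflict I J)
  let wc := ∑ J ∈ Is, J.len
  if I.len ≥ lam * wc then  -- main replacement rule
    insert I (S \ Is)
  else if Prd I = true ∧ I.len ≥ wc ∧ ∀ J ∈ Is, Prd J = false then
    -- predictions rule
    insert I (S \ Is)
  else S

/-- The solution produced by algorithm `Revoke-Proportional` with
parameter `lam` on the instance `inst` with predictions `Prd`. -/
def revokeProp (lam : ℝ) (Prd : Ivl → Bool) (inst : List Ivl) : Finset Ivl :=
  inst.foldl (revokePropStep lam Prd) ∅

open MeasureTheory in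
/-- Geometric packing lemma. -/
lemma pack (opt : Finset Ivl) (hf : Feasible opt) (J : Ivl) :
    ∑ O ∈ opt.filter (fun O => Conflict O J), min O.len J.len ≤ 3 * J.len := by
  set F := opt.filter (fun O => Conflict O J) with hF
  let a : Ivl → ℝ := fun O => max O.s (J.s - J.len)
  let U : Ivl → Set ℝ := fun O => Set.Ico (a O) (a O + min O.len J.len)
  have hJ := J.lt
  have hin : ∀ O ∈ F, U O ⊆ O.occ ∧ U O ⊆ Set.Ico (J.s - J.len) (J.f + J.len) := by
    intro O hO
    obtain ⟨x, hx1, hx2⟩ := (Finset.mem_filter.1 hO).2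
    have hOl := O.lt
    simp only [Ivl.occ, Set.mem_Ico] at hx1 hx2
    refine ⟨fun y hy => ?_, fun y hy => ?_⟩ <;>
    · simp only [U, a, Ivl.occ, Set.mem_Ico, Ivl.len] at hy ⊢
      rcases max_cases O.s (J.s - (J.f - J.s)) with h | h <;>
      rcases min_cases (O.f - O.s) (J.f - J.s) with h' | h' <;>
      constructor <;> linarith
  have hdisj : Set.PairwiseDisjoint (F : Set Ivl) U := by
    intro O hO O' hO' hne
    have hO := Finset.mem_coe.1 hO
    have hO' := Finset.mem_coe.1 hO'
    refine Set.disjoint_left.2 fun x hx hx' => ?_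
    exact hf O (Finset.mem_filter.1 hO).1 O' (Finset.mem_filter.1 hO').1 hne
      ⟨x, (hin O hO).1 hx, (hin O' hO').1 hx'⟩
  have hU : ∀ O, volume.real (U O) = min O.len J.len := by
    intro O
    have h1 : 0 ≤ O.len := by have := O.lt; simp only [Ivl.len]; linarith
    have h2 : 0 ≤ J.len := by simp only [Ivl.len]; linarith
    have := le_min h1 h2
    simp only [U]
    rw [Real.volume_real_Ico_of_le (by linarith)]
    ring
  calc ∑ O ∈ F, min O.len J.len = ∑ O ∈ F, volume.real (U O) := by simp only [hU]
    _ = volume.real (⋃ O ∈ F, U O) := by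
        rw [measureReal_biUnion_finset hdisj (fun _ _ => measurableSet_Ico) (fun O _ => by simp [U])]
    _ ≤ volume.real (Set.Ico (J.s - J.len) (J.f + J.len)) := by
        apply measureReal_mono
        · exact Set.iUnion₂_subset fun O hO => (hin O hO).2
        · simp
    _ = 3 * J.len := by
        rw [Real.volume_real_Ico_of_le (by simp only [Ivl.len]; linarith)]
        simp only [Ivl.len]; ring

lemma len_pos' (I : Ivl) : 0 < I.len := by
  have := I.lt; simp only [Ivl.len]; linarith

lemma conflict_comm' (I J : Ivl) : Conflict I J ↔ Conflict J I := by
  simp only [Conflict, Set.inter_comm]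

/-- Direct charge of arrived (`P`) optimal intervals on `J`. -/
def dch (opt P : Finset Ivl) (J : Ivl) : ℝ :=
  ∑ O ∈ (opt ∩ P).filter (fun O => Conflict O J), min O.len J.len

/-- Potential of `J`. -/
def pot (lam : ℝ) (opt P : Finset Ivl) (J : Ivl) : ℝ :=
  if J ∈ opt then 3 * lam / (lam - 1) * J.len else 3 / (lam - 1) * J.len + dch opt P J

lemma dch_le (opt P : Finset Ivl) (hf : Feasible opt) (J : Ivl) :
    dch opt P J ≤ 3 * J.len := by
  refine le_trans ?_ (pack opt hf J)
  apply Finset.sum_le_sum_of_subset_of_nonneg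
  · exact Finset.filter_subset_filter _ Finset.inter_subset_left
  · intro O _ _
    exact le_min (len_pos' O).le (len_pos' J).le

lemma dch_insert (opt P : Finset Ivl) (I J : Ivl) (hI : I ∈ opt) (hP : I ∉ P) :
    dch opt (insert I P) J =
      dch opt P J + if Conflict I J then min I.len J.len else 0 := by
  unfold dch
  rw [Finset.inter_insert_of_mem hI, Finset.filter_insert]
  split_ifs with h
  · rw [Finset.sum_insert (by simp [hP])]; ring
  · ring

lemma pot_le (lam : ℝ) (hlam : 1 < lam) (opt P : Finset Ivl) (hf : Feasible opt) (J : Ivl) :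
    pot lam opt P J ≤ 3 * lam / (lam - 1) * J.len := by
  unfold pot
  split_ifs with h
  · exact le_rfl
  · have := dch_le opt P hf J
    have h0 : lam - 1 ≠ 0 := by linarith
    have : 3 * lam / (lam - 1) = 3 / (lam - 1) + 3 := by field_simp; ring
    rw [this]; linarith

lemma pot_ge (lam : ℝ) (hlam : 1 < lam) (opt P : Finset Ivl) (J : Ivl) :
    3 / (lam - 1) * J.len ≤ pot lam opt P J := by
  have hJ := len_pos' J
  have h0 : 0 < lam - 1 := by linarith
  unfold pot
  split_ifs with h
  · gcongr; linarith
  · have : 0 ≤ dch opt P J := Finset.sum_nonneg fun O _ => le_min (len_pos' O).le hJ.le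
    linarith

lemma pot_insert_mono (lam : ℝ) (opt P : Finset Ivl) (I J : Ivl) (hI : I ∈ opt) (hP : I ∉ P) :
    pot lam opt P J ≤ pot lam opt (insert I P) J := by
  unfold pot
  split_ifs with h
  · exact le_rfl
  · rw [dch_insert opt P I J hI hP]
    have := le_min (len_pos' I).le (len_pos' J).le
    split_ifs <;> linarith

lemma pot_insert_not (lam : ℝ) (opt P : Finset Ivl) (I J : Ivl) (hI : I ∉ opt) :
    pot lam opt (insert I P) J = pot lam opt P J := by
  unfold pot dch
  rw [Finset.inter_insert_of_notMem hI]

lemma sum_accept (S : Finset Ivl) (I : Ivl) (hI : I ∉ S) (g : Ivl → ℝ) :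
    ∑ J ∈ insert I (S \ S.filter (fun J => Conflict I J)), g J
      = g I + (∑ J ∈ S, g J - ∑ J ∈ S.filter (fun J => Conflict I J), g J) := by
  rw [Finset.sum_insert (by simp [hI]), Finset.sum_sdiff_eq_sub (Finset.filter_subset _ _)]

lemma le_sum_min (F : Finset Ivl) (x : ℝ) (hx : 0 < x) (h : x ≤ ∑ J ∈ F, J.len) :
    x ≤ ∑ J ∈ F, min x J.len := by
  by_cases hb : ∃ J ∈ F, x ≤ J.len
  · obtain ⟨J, hJ, hle⟩ := hb
    calc x = min x J.len := (min_eq_left hle).symm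
      _ ≤ _ := Finset.single_le_sum (f := fun J : Ivl => min x J.len)
          (fun K _ => le_min hx.le (len_pos' K).le) hJ
  · push Not at hb
    rw [Finset.sum_congr rfl (fun J hJ => min_eq_right (hb J hJ).le)]
    exact h

lemma step_inv (lam : ℝ) (hlam : 1 < lam) (Prd : Ivl → Bool) (opt P S : Finset Ivl) (I : Ivl)
    (hf : Feasible opt) (hSP : S ⊆ P) (hIP : I ∉ P)
    (hacc : ∀ J ∈ insert I P, (Prd J = true ↔ J ∈ opt))
    (hinv : wsum (opt ∩ P) ≤ ∑ J ∈ S, pot lam opt P J) :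
    revokePropStep lam Prd S I ⊆ insert I P ∧
    wsum (opt ∩ insert I P) ≤
      ∑ J ∈ revokePropStep lam Prd S I, pot lam opt (insert I P) J := by
  have hIS : I ∉ S := fun h => hIP (hSP h)
  have hIpos := len_pos' I
  have h0 : 0 < lam - 1 := by linarith
  have hC : 3 * lam / (lam - 1) = 3 / (lam - 1) + 3 := by field_simp; ring
  have hc0 : 0 < 3 / (lam - 1) := by positivity
  set F := S.filter (fun J => Conflict I J) with hF
  have hwc : 0 ≤ ∑ J ∈ F, J.len := Finset.sum_nonneg fun J _ => (len_pos' J).le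
  have hwlam : ∑ J ∈ F, J.len ≤ lam * ∑ J ∈ F, J.len := by nlinarith
  have hsub1 : insert I (S \ F) ⊆ insert I P :=
    Finset.insert_subset_insert _ (Finset.sdiff_subset.trans hSP)
  have hsub2 : S ⊆ insert I P := hSP.trans (Finset.subset_insert _ _)
  by_cases hI : I ∈ opt
  · have hFopt : ∀ J ∈ F, J ∉ opt := by
      intro J hJ hJo
      have hJ' := Finset.mem_filter.1 hJ
      exact hf I hI J hJo (fun h => hIS (h ▸ hJ'.1)) hJ'.2
    have hw : wsum (opt ∩ insert I P) = I.len + wsum (opt ∩ P) := by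
      unfold wsum
      rw [Finset.inter_insert_of_mem hI, Finset.sum_insert (by simp [hIP])]
    have hprd : Prd I = true := (hacc I (Finset.mem_insert_self _ _)).2 hI
    have hFprd : ∀ J ∈ F, Prd J = false := by
      intro J hJ
      have h := (hacc J (hsub2 (Finset.mem_filter.1 hJ).1)).not.2 (hFopt J hJ)
      simpa using h
    have hmono : ∑ J ∈ S, pot lam opt P J ≤ ∑ J ∈ S, pot lam opt (insert I P) J :=
      Finset.sum_le_sum fun J _ => pot_insert_mono lam opt P I J hI hIP
    by_cases hacpt : ∑ J ∈ F, J.len ≤ I.len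
    · have hstep : revokePropStep lam Prd S I = insert I (S \ F) := by
        unfold revokePropStep
        simp only [← hF]
        split_ifs with h1 h2
        · rfl
        · rfl
        · exact absurd ⟨hprd, hacpt, hFprd⟩ h2
      rw [hstep]
      refine ⟨hsub1, ?_⟩
      have hS : ∑ J ∈ S, pot lam opt P J - ∑ J ∈ F, pot lam opt P J
          ≤ ∑ J ∈ S, pot lam opt (insert I P) J - ∑ J ∈ F, pot lam opt (insert I P) J := by
        rw [← Finset.sum_sdiff_eq_sub (Finset.filter_subset _ _),
          ← Finset.sum_sdiff_eq_sub (Finset.filter_subset _ _)]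
        exact Finset.sum_le_sum fun J _ => pot_insert_mono lam opt P I J hI hIP
      have hFb : ∑ J ∈ F, pot lam opt P J ≤ (3 / (lam - 1) + 2) * ∑ J ∈ F, J.len := by
        rw [Finset.mul_sum]
        apply Finset.sum_le_sum
        intro J hJ
        have hJle : J.len ≤ I.len :=
          (Finset.single_le_sum (f := fun J : Ivl => J.len)
            (fun K _ => (len_pos' K).le) hJ).trans hacpt
        have h3 := dch_le opt (insert I P) hf J
        rw [dch_insert opt P I J hI hIP, if_pos (Finset.mem_filter.1 hJ).2,
          min_eq_right hJle] at h3
        unfold pot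
        rw [if_neg (hFopt J hJ)]
        linarith
      have hpI : pot lam opt (insert I P) I = (3 / (lam - 1) + 3) * I.len := by
        unfold pot; rw [if_pos hI, hC]
      rw [hF, sum_accept S I hIS, ← hF, hw, hpI]
      have : (3 / (lam - 1) + 2) * ∑ J ∈ F, J.len ≤ (3 / (lam - 1) + 2) * I.len := by gcongr
      linarith
    · have hstep : revokePropStep lam Prd S I = S := by
        unfold revokePropStep
        simp only [← hF]
        split_ifs with h1 h2
        · exact absurd (hwlam.trans h1) hacpt
        · exact absurd h2.2.1 hacpt
        · rfl
      rw [hstep]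
      refine ⟨hsub2, ?_⟩
      have hgain : ∑ J ∈ S, pot lam opt (insert I P) J
          = ∑ J ∈ S, pot lam opt P J + ∑ J ∈ F, min I.len J.len := by
        rw [hF, Finset.sum_filter, ← Finset.sum_add_distrib]
        apply Finset.sum_congr rfl
        intro J hJ
        unfold pot
        by_cases hJo : J ∈ opt
        · have : ¬ Conflict I J := fun hc => hFopt J (Finset.mem_filter.2 ⟨hJ, hc⟩) hJo
          simp [hJo, this]
        · rw [if_neg hJo, if_neg hJo, dch_insert opt P I J hI hIP]; ring
      have := le_sum_min F I.len hIpos (not_le.1 hacpt).le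
      rw [hw, hgain]
      linarith
  · have hw : wsum (opt ∩ insert I P) = wsum (opt ∩ P) := by
      rw [Finset.inter_insert_of_notMem hI]
    have hprd : ¬ Prd I = true := fun h => hI ((hacc I (Finset.mem_insert_self _ _)).1 h)
    simp only [pot_insert_not lam opt P I _ hI, hw]
    unfold revokePropStep
    simp only [← hF]
    split_ifs with h1 h2
    · refine ⟨hsub1, ?_⟩
      rw [hF, sum_accept S I hIS, ← hF]
      have h3 : ∑ J ∈ F, pot lam opt P J ≤ 3 * lam / (lam - 1) * ∑ J ∈ F, J.len := by
        rw [Finset.mul_sum]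
        exact Finset.sum_le_sum fun J _ => pot_le lam hlam opt P hf J
      have h4 := pot_ge lam hlam opt P I
      have h5 : 3 / (lam - 1) * (lam * ∑ J ∈ F, J.len) ≤ 3 / (lam - 1) * I.len := by
        gcongr
      have h6 : 3 * lam / (lam - 1) * ∑ J ∈ F, J.len
          = 3 / (lam - 1) * (lam * ∑ J ∈ F, J.len) := by ring
      linarith
    · exact absurd h2.1 hprd
    · exact ⟨hsub2, hinv⟩

lemma fold_inv (lam : ℝ) (hlam : 1 < lam) (Prd : Ivl → Bool) (opt : Finset Ivl)
    (hf : Feasible opt) (l : List Ivl) : ∀ (P S : Finset Ivl), l.Nodup →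
    (∀ I ∈ l, I ∉ P) → S ⊆ P →
    (∀ J, J ∈ l ∨ J ∈ P → (Prd J = true ↔ J ∈ opt)) →
    wsum (opt ∩ P) ≤ ∑ J ∈ S, pot lam opt P J →
    wsum (opt ∩ (P ∪ l.toFinset)) ≤
      ∑ J ∈ l.foldl (revokePropStep lam Prd) S, pot lam opt (P ∪ l.toFinset) J := by
  induction l with
  | nil => intro P S _ _ _ _ h; simpa using h
  | cons I l ih =>
    intro P S hnd hP hSP hacc hinv
    obtain ⟨h1, h2⟩ := step_inv lam hlam Prd opt P S I hf hSP (hP I (by simp))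
      (by
        intro J hJ
        apply hacc
        rcases Finset.mem_insert.1 hJ with h | h
        · left; simp [h]
        · right; exact h) hinv
    have hnd' := List.nodup_cons.1 hnd
    have := ih (insert I P) (revokePropStep lam Prd S I) hnd'.2
      (by
        intro J hJ hJ'
        rcases Finset.mem_insert.1 hJ' with h | h
        · exact hnd'.1 (h ▸ hJ)
        · exact hP J (by simp [hJ]) h) h1
      (by
        intro J hJ
        apply hacc
        rcases hJ with h | h
        · left; simp [h]
        · rcases Finset.mem_insert.1 h with h | h
          · left; simp [h]
          · right; exact h) h2
    have he : insert I P ∪ l.toFinset = P ∪ (I :: l).toFinset := by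
      ext x; simp
    rw [he] at this
    simpa using this

theorem revokeProp_consistent
    (lam : ℝ) (hlam : 1 < lam)
    (inst : List Ivl) (hdist : inst.Nodup) (Prd : Ivl → Bool)
    (opt : Finset Ivl) (hopt : IsMaxWeightOpt inst opt)
    (hacc : ∀ I ∈ inst, (Prd I = true ↔ I ∈ opt)) :
    wsum opt ≤ (3 * lam / (lam - 1)) * wsum (revokeProp lam Prd inst) := by
  obtain ⟨hsub, hf, -⟩ := hopt
  have h := fold_inv lam hlam Prd opt hf inst ∅ ∅ hdist (by simp) (by simp)
    (by intro J hJ; exact hacc J (by simpa using hJ)) (by simp [wsum])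
  have he : opt ∩ (∅ ∪ inst.toFinset) = opt := by
    rw [Finset.empty_union]
    exact Finset.inter_eq_left.2 fun I hI => List.mem_toFinset.2 (hsub I hI)
  rw [he] at h
  refine h.trans ?_
  unfold revokeProp wsum
  rw [Finset.mul_sum]
  exact Finset.sum_le_sum fun J _ => pot_le lam hlam opt _ hf J
end
end

section
/- Algorithm Revoke-Proportional with parameter λ > 1 is (4λ²+2λ)/(λ−1)-robust for interval selection with proportional weights: for every real λ > 1, every instance, every prediction assignment, and every maximum-weight feasible set OPT, the solution produced by Revoke-Proportional satisfies OPT ≤ ((4λ²+2λ)/(λ−1))·ALG. -/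
attribute [local instance] Classical.propDecidable

noncomputable section

namespace RevokeAux

lemma len_pos (I : Ivl) : 0 < I.len := sub_pos.2 I.lt

lemma conflict_iff (I J : Ivl) : Conflict I J ↔ I.s < J.f ∧ J.s < I.f := by
  have h1 := I.lt
  have h2 := J.lt
  unfold Conflict Ivl.occ
  rw [Set.Ico_inter_Ico, Set.nonempty_Ico]
  simp only [max_lt_iff, lt_min_iff]
  tauto

/-- coefficient of the potential -/
def coef (lam : ℝ) (Prd : Ivl → Bool) (J : Ivl) : ℝ :=
  if Prd J = true then 2 * lam / (lam - 1) else (lam + 1) / (lam - 1)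

/-- Invariant: `A` collects all intervals ever accepted. -/
lemma invariant (lam : ℝ) (hlam : 1 < lam) (Prd : Ivl → Bool) (l : List Ivl) :
    ∃ A : Finset Ivl, revokeProp lam Prd l ⊆ A ∧
      wsum A ≤ ∑ J ∈ revokeProp lam Prd l, coef lam Prd J * J.len ∧
      ∀ I ∈ l, I ∈ A ∨ I.len ≤ lam * ∑ J ∈ A.filter (fun J => Conflict I J), J.len := by
  have hl0 : 0 < lam - 1 := by linarith
  induction l using List.reverseRecOn with
  | nil => exact ⟨∅, by simp [revokeProp, wsum]⟩
  | append_singleton l I ih =>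
    obtain ⟨A, hSA, hW, hR⟩ := ih
    have hstep : revokeProp lam Prd (l ++ [I]) =
        revokePropStep lam Prd (revokeProp lam Prd l) I := by
      simp [revokeProp, List.foldl_append]
    rw [hstep]
    generalize revokeProp lam Prd l = S at *
    set Is := S.filter (fun J => Conflict I J) with hIs
    have hIsS : Is ⊆ S := Finset.filter_subset _ _
    have hmono : ∀ (B : Finset Ivl), A ⊆ B → ∀ K : Ivl,
        ∑ J ∈ A.filter (fun J => Conflict K J), J.len ≤
        ∑ J ∈ B.filter (fun J => Conflict K J), J.len := by
      intro B hB K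
      exact Finset.sum_le_sum_of_subset_of_nonneg (Finset.filter_subset_filter _ hB)
        (fun i _ _ => (len_pos i).le)
    have hsplit : ∑ J ∈ S \ Is, coef lam Prd J * J.len + ∑ J ∈ Is, coef lam Prd J * J.len
        = ∑ J ∈ S, coef lam Prd J * J.len := Finset.sum_sdiff hIsS
    have hnot : I ∉ S \ Is := by
      intro h
      rw [Finset.mem_sdiff, hIs, Finset.mem_filter] at h
      exact h.2 ⟨h.1, (conflict_iff I I).2 ⟨I.lt, I.lt⟩⟩
    have accept : I.len + ∑ J ∈ Is, coef lam Prd J * J.len ≤ coef lam Prd I * I.len →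
        ∃ B : Finset Ivl, insert I (S \ Is) ⊆ B ∧
      wsum B ≤ ∑ J ∈ insert I (S \ Is), coef lam Prd J * J.len ∧
      ∀ K ∈ l ++ [I], K ∈ B ∨
        K.len ≤ lam * ∑ J ∈ B.filter (fun J => Conflict K J), J.len := by
      intro hc
      refine ⟨insert I A, Finset.insert_subset_insert _
        (Finset.sdiff_subset.trans hSA), ?_, ?_⟩
      · rw [Finset.sum_insert hnot]
        have : wsum (insert I A) ≤ I.len + wsum A := by
          unfold wsum
          by_cases h : I ∈ A
          · rw [Finset.insert_eq_of_mem h]; linarith [len_pos I]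
          · rw [Finset.sum_insert h]
        linarith
      · intro K hK
        rcases List.mem_append.1 hK with h | h
        · rcases hR K h with h | h
          · exact Or.inl (Finset.mem_insert_of_mem h)
          · right
            refine h.trans ?_
            have := hmono (insert I A) (Finset.subset_insert _ _) K
            gcongr
        · left
          rw [List.mem_singleton.1 h]; exact Finset.mem_insert_self _ _
    unfold revokePropStep
    simp only [← hIs]
    split_ifs with h1 h2
    · apply accept
      have hb : ∑ J ∈ Is, coef lam Prd J * J.len ≤ 2 * lam / (lam - 1) * ∑ J ∈ Is, J.len := by
        rw [Finset.mul_sum]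
        refine Finset.sum_le_sum fun J _ => ?_
        have := len_pos J
        gcongr
        unfold coef
        split_ifs
        · exact le_rfl
        · gcongr; linarith
      have hc : (lam + 1) / (lam - 1) ≤ coef lam Prd I := by
        unfold coef
        split_ifs
        · gcongr; linarith
        · exact le_rfl
      have h3 : (lam + 1) / (lam - 1) * I.len ≤ coef lam Prd I * I.len :=
        mul_le_mul_of_nonneg_right hc (len_pos I).le
      have h4 : 2 * lam / (lam - 1) * ∑ J ∈ Is, J.len ≤ 2 / (lam - 1) * I.len := by
        have : 2 * lam / (lam - 1) * ∑ J ∈ Is, J.len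
          = 2 / (lam - 1) * (lam * ∑ J ∈ Is, J.len) := by ring
        rw [this]
        gcongr
      have h5 : (lam + 1) / (lam - 1) * I.len = I.len + 2 / (lam - 1) * I.len := by
        field_simp; ring
      linarith
    · apply accept
      obtain ⟨hp, hw, hall⟩ := h2
      have hb : ∑ J ∈ Is, coef lam Prd J * J.len = (lam + 1) / (lam - 1) * ∑ J ∈ Is, J.len := by
        rw [Finset.mul_sum]
        refine Finset.sum_congr rfl fun J hJ => ?_
        simp [coef, hall J hJ]
      have h4 : (lam + 1) / (lam - 1) * ∑ J ∈ Is, J.len ≤ (lam + 1) / (lam - 1) * I.len := by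
        gcongr
      have h5 : coef lam Prd I * I.len = I.len + (lam + 1) / (lam - 1) * I.len := by
        simp only [coef, hp, if_true]
        field_simp; ring
      linarith
    · refine ⟨A, hSA, hW, ?_⟩
      intro K hK
      rcases List.mem_append.1 hK with h | h
      · exact hR K h
      · right
        rw [List.mem_singleton.1 h]
        have h6 : ∑ J ∈ Is, J.len ≤ ∑ J ∈ A.filter (fun J => Conflict I J), J.len :=
          Finset.sum_le_sum_of_subset_of_nonneg (Finset.filter_subset_filter _ hSA)
            (fun i _ _ => (len_pos i).le)
        have h7 := mul_le_mul_of_nonneg_left h6 (by linarith : (0:ℝ) ≤ lam)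
        push Not at h1
        linarith

lemma contained_sum (T : Finset Ivl) (hT : Feasible T) (J : Ivl)
    (h : ∀ I ∈ T, J.s ≤ I.s ∧ I.f ≤ J.f) : ∑ I ∈ T, I.len ≤ J.len := by
  have hv : ∀ I : Ivl, I.len = MeasureTheory.volume.real I.occ := by
    intro I
    unfold Ivl.occ Ivl.len
    rw [Real.volume_real_Ico_of_le I.lt.le]
  have hd : Set.PairwiseDisjoint (T : Set Ivl) Ivl.occ := by
    intro I hI K hK hne
    exact Set.not_nonempty_iff_eq_empty.1 (hT I hI K hK hne) |> Set.disjoint_iff_inter_eq_empty.2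
  rw [hv J, Finset.sum_congr rfl (fun I _ => hv I),
    ← MeasureTheory.measureReal_biUnion_finset hd (fun I _ => measurableSet_Ico)
      (fun I _ => by simp [Ivl.occ])]
  refine MeasureTheory.measureReal_mono ?_ (by simp [Ivl.occ])
  exact Set.iUnion₂_subset fun I hI => Set.Ico_subset_Ico (h I hI).1 (h I hI).2

lemma point_sum (T : Finset Ivl) (hT : Feasible T) (x c : ℝ) (hc : 0 ≤ c) :
    ∑ I ∈ T, (if I.s < x ∧ x < I.f then c else 0) ≤ c := by
  rw [← Finset.sum_filter, Finset.sum_const, nsmul_eq_mul]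
  have : (T.filter (fun I => I.s < x ∧ x < I.f)).card ≤ 1 := by
    rw [Finset.card_le_one]
    intro a ha b hb
    rw [Finset.mem_filter] at ha hb
    by_contra hne
    exact hT a ha.1 b hb.1 hne ⟨x, ⟨ha.2.1.le, ha.2.2⟩, ⟨hb.2.1.le, hb.2.2⟩⟩
  have h' : ((T.filter (fun I => I.s < x ∧ x < I.f)).card : ℝ) ≤ 1 := by exact_mod_cast this
  nlinarith

end RevokeAux

open RevokeAux in
theorem revokeProp_robust
    (lam : ℝ) (hlam : 1 < lam)
    (inst : List Ivl) (hdist : inst.Nodup) (Prd : Ivl → Bool)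
    (opt : Finset Ivl) (hopt : IsMaxWeightOpt inst opt) :
    wsum opt ≤ ((4 * lam ^ 2 + 2 * lam) / (lam - 1)) *
      wsum (revokeProp lam Prd inst) := by
  obtain ⟨A, -, hW, hR⟩ := invariant lam hlam Prd inst
  obtain ⟨hsub, hfeas, -⟩ := hopt
  have hl0 : 0 < lam - 1 := by linarith
  have hl1 : 0 < lam := by linarith
  let g1 : Ivl → Ivl → ℝ := fun I J => if J.s ≤ I.s ∧ I.f ≤ J.f then I.len else 0
  let g2 : Ivl → Ivl → ℝ := fun I J => if I.s < J.s ∧ J.s < I.f then lam * J.len else 0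
  let g3 : Ivl → Ivl → ℝ := fun I J => if I.s < J.f ∧ J.f < I.f then lam * J.len else 0
  have p1 : ∀ I J, 0 ≤ g1 I J := fun I J => by
    have := len_pos I
    simp only [g1]; split_ifs <;> positivity
  have p2 : ∀ I J, 0 ≤ g2 I J := fun I J => by
    have := len_pos J
    simp only [g2]; split_ifs <;> positivity
  have p3 : ∀ I J, 0 ≤ g3 I J := fun I J => by
    have := len_pos J
    simp only [g3]; split_ifs <;> positivity
  have key : ∀ I ∈ opt, I.len ≤ ∑ J ∈ A, (g1 I J + g2 I J + g3 I J) := by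
    intro I hI
    by_cases hc : ∃ J ∈ A, J.s ≤ I.s ∧ I.f ≤ J.f
    · obtain ⟨J, hJ, hJc⟩ := hc
      have h1 : I.len = g1 I J := by simp only [g1]; rw [if_pos hJc]
      have h2 := Finset.single_le_sum (f := fun J => g1 I J + g2 I J + g3 I J)
        (fun K _ => by linarith [p1 I K, p2 I K, p3 I K]) hJ
      have := p2 I J
      have := p3 I J
      linarith
    · rcases hR I (hsub I hI) with h | h
      · exact absurd ⟨I, h, le_rfl, le_rfl⟩ hc
      · refine h.trans ?_
        rw [Finset.mul_sum, Finset.sum_filter]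
        refine Finset.sum_le_sum fun J hJ => ?_
        have q1 := p1 I J
        have q2 := p2 I J
        have q3 := p3 I J
        split_ifs with hcf
        · rw [conflict_iff] at hcf
          by_cases hs : I.s < J.s
          · have : g2 I J = lam * J.len := if_pos ⟨hs, hcf.2⟩
            linarith
          · have hf : J.f < I.f := by
              by_contra hf
              exact hc ⟨J, hJ, not_lt.1 hs, not_lt.1 hf⟩
            have : g3 I J = lam * J.len := if_pos ⟨hcf.1, hf⟩
            linarith
        · linarith
  have hopt1 : wsum opt ≤ (2 * lam + 1) * wsum A := by
    unfold wsum
    refine (Finset.sum_le_sum key).trans ?_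
    rw [Finset.sum_comm, Finset.mul_sum]
    refine Finset.sum_le_sum fun J _ => ?_
    rw [Finset.sum_add_distrib, Finset.sum_add_distrib]
    have hJ : 0 ≤ lam * J.len := mul_nonneg hl1.le (len_pos J).le
    have e1 : ∑ I ∈ opt, g1 I J ≤ J.len := by
      simp only [g1]
      rw [← Finset.sum_filter]
      refine contained_sum _ ?_ J (fun I hI => (Finset.mem_filter.1 hI).2)
      intro a ha b hb
      exact hfeas a (Finset.mem_filter.1 ha).1 b (Finset.mem_filter.1 hb).1
    have e2 : ∑ I ∈ opt, g2 I J ≤ lam * J.len := point_sum opt hfeas J.s _ hJ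
    have e3 : ∑ I ∈ opt, g3 I J ≤ lam * J.len := point_sum opt hfeas J.f _ hJ
    linarith
  have hA : wsum A ≤ 2 * lam / (lam - 1) * wsum (revokeProp lam Prd inst) := by
    refine hW.trans ?_
    unfold wsum
    rw [Finset.mul_sum]
    refine Finset.sum_le_sum fun J _ => ?_
    have := len_pos J
    gcongr
    unfold coef
    split_ifs
    · exact le_rfl
    · gcongr; linarith
  calc wsum opt ≤ (2 * lam + 1) * wsum A := hopt1
    _ ≤ (2 * lam + 1) * (2 * lam / (lam - 1) * wsum (revokeProp lam Prd inst)) := by gcongr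
    _ = _ := by ring
end
end
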